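/- arXiv:0804.0590 — 2 statements merged into one kernel-verified Lean document; each statement's English description precedes it below -/
import Mathlib

section
/- Let f, g and f', g' be homogeneous elements of R of positive degrees such that f, g is a regular sequence and f', g' is a regular sequence. If (f',g') ⊆ (f,g) and (deg f')·(deg g') = (deg f)·(deg g), then (f',g') = (f,g). (A height-two complete intersection contained in another one of the same degree is equal to it.) -/
/-
Common setup: `R = k[x₀,…,xₙ]` is the standard graded polynomial ring
`MvPolynomial (Fin (n+1)) k` over a field `k`.
-/

open CategoryTheory MvPolynomial RingTheory

noncomputable section

variable {k : Type} [Field k] {n : ℕ}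

/-- A homogeneous ideal: one generated by homogeneous elements. -/
def IsHomogeneousIdeal (I : Ideal (MvPolynomial (Fin (n+1)) k)) : Prop :=
  ∃ S : Set (MvPolynomial (Fin (n+1)) k),
    (∀ f ∈ S, ∃ d, MvPolynomial.IsHomogeneous f d) ∧ I = Ideal.span S

/-- The height of an ideal: the infimum of the heights of the primes containing it. -/
def idealHeight (I : Ideal (MvPolynomial (Fin (n+1)) k)) : ℕ∞ :=
  ⨅ (p : PrimeSpectrum (MvPolynomial (Fin (n+1)) k)) (_ : I ≤ p.asIdeal), Order.height p

/-- A complete intersection ideal: one generated by a regular sequence of homogeneous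
elements of positive degree. -/
def IsCI (I : Ideal (MvPolynomial (Fin (n+1)) k)) : Prop :=
  ∃ l : List (MvPolynomial (Fin (n+1)) k),
    (∀ f ∈ l, ∃ d, 0 < d ∧ MvPolynomial.IsHomogeneous f d) ∧
    RingTheory.Sequence.IsRegular (MvPolynomial (Fin (n+1)) k) l ∧
    I = Ideal.span {x | x ∈ l}

/-- Vanishing of `Ext^i_R(R/I, R)`. -/
def extVanishes (I : Ideal (MvPolynomial (Fin (n+1)) k)) (i : ℕ) : Prop :=
  Subsingleton (((Ext (MvPolynomial (Fin (n+1)) k) (ModuleCat (MvPolynomial (Fin (n+1)) k)) i).obj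
    (Opposite.op (ModuleCat.of _ (MvPolynomial (Fin (n+1)) k ⧸ I)))).obj
    (ModuleCat.of _ (MvPolynomial (Fin (n+1)) k)))

/-- `Ext^i_R(R/I, R)` is a cyclic `R`-module. -/
def extCyclic (I : Ideal (MvPolynomial (Fin (n+1)) k)) (i : ℕ) : Prop :=
  ∃ m : (((Ext (MvPolynomial (Fin (n+1)) k) (ModuleCat (MvPolynomial (Fin (n+1)) k)) i).obj
      (Opposite.op (ModuleCat.of _ (MvPolynomial (Fin (n+1)) k ⧸ I)))).obj
      (ModuleCat.of _ (MvPolynomial (Fin (n+1)) k))),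
    Submodule.span (MvPolynomial (Fin (n+1)) k) {m} = ⊤

/-- An arithmetically Gorenstein homogeneous ideal of height three: a proper homogeneous
ideal of height 3 with `Ext^i_R(R/I, R) = 0` for `i ≠ 3` and `Ext^3_R(R/I, R)` cyclic. -/
def IsArithGorHt3 (I : Ideal (MvPolynomial (Fin (n+1)) k)) : Prop :=
  I ≠ ⊤ ∧ IsHomogeneousIdeal I ∧ idealHeight I = 3 ∧
    (∀ i : ℕ, i ≠ 3 → extVanishes I i) ∧ extCyclic I 3

/-- `μ(I)`: the least cardinality of a subset of `R` generating `I`. -/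
def mu (I : Ideal (MvPolynomial (Fin (n+1)) k)) : ℕ :=
  sInf {m : ℕ | ∃ S : Finset (MvPolynomial (Fin (n+1)) k),
    S.card = m ∧ Ideal.span (S : Set (MvPolynomial (Fin (n+1)) k)) = I}

/-- `a_i(I)`: the least integer `d` such that `I` contains a regular sequence of `i`
homogeneous elements each of degree at most `d`. -/
def aDeg (i : ℕ) (I : Ideal (MvPolynomial (Fin (n+1)) k)) : ℕ :=
  sInf {d : ℕ | ∃ l : List (MvPolynomial (Fin (n+1)) k), l.length = i ∧
    (∀ f ∈ l, f ∈ I) ∧ (∀ f ∈ l, ∃ e ≤ d, MvPolynomial.IsHomogeneous f e) ∧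
    RingTheory.Sequence.IsRegular (MvPolynomial (Fin (n+1)) k) l}

/-- A minimal complete intersection inside a height-three homogeneous ideal `I`:
a regular sequence `f₁, f₂, f₃` of homogeneous elements of `I` with `deg fⱼ = a_j(I)`. -/
def IsMinCI (I : Ideal (MvPolynomial (Fin (n+1)) k)) (f₁ f₂ f₃ : MvPolynomial (Fin (n+1)) k) :
    Prop :=
  f₁ ∈ I ∧ f₂ ∈ I ∧ f₃ ∈ I ∧
  MvPolynomial.IsHomogeneous f₁ (aDeg 1 I) ∧ MvPolynomial.IsHomogeneous f₂ (aDeg 2 I) ∧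
  MvPolynomial.IsHomogeneous f₃ (aDeg 3 I) ∧
  RingTheory.Sequence.IsRegular (MvPolynomial (Fin (n+1)) k) [f₁, f₂, f₃]

open MvPolynomial in
theorem aux_comp {k : Type} [Field k] {n : ℕ} (a f : MvPolynomial (Fin (n+1)) k) (df d : ℕ)
    (hf : f.IsHomogeneous df) :
    ∃ a', homogeneousComponent d (a * f) = a' * f ∧
      (a' = 0 ∨ ∃ i, i + df = d ∧ a'.IsHomogeneous i) := by
  letI := MvPolynomial.gradedAlgebra (σ := Fin (n+1)) (R := k)
  have key : ∀ (p : MvPolynomial (Fin (n+1)) k) (i : ℕ),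
      (DirectSum.decompose (homogeneousSubmodule (Fin (n+1)) k) p i : MvPolynomial (Fin (n+1)) k)
        = homogeneousComponent i p := fun p i => decomposition.decompose'_apply p i
  have hf' : f ∈ homogeneousSubmodule (Fin (n+1)) k df := hf
  by_cases h : df ≤ d
  · refine ⟨homogeneousComponent (d - df) a, ?_, Or.inr ⟨d - df, by omega,
      homogeneousComponent_isHomogeneous _ _⟩⟩
    rw [← key, ← key]
    exact DirectSum.coe_decompose_mul_of_right_mem_of_le _ hf' h
  · refine ⟨0, ?_, Or.inl rfl⟩
    rw [← key, zero_mul]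
    exact DirectSum.coe_decompose_mul_of_right_mem_of_not_le _ hf' h

open MvPolynomial in
theorem aux_mem {k : Type} [Field k] {n : ℕ} (f g h : MvPolynomial (Fin (n+1)) k) (df dg d : ℕ)
    (hf : f.IsHomogeneous df) (hg : g.IsHomogeneous dg) (hh : h.IsHomogeneous d)
    (hm : h ∈ Ideal.span {f, g}) :
    ∃ a b, a * f + b * g = h ∧ (a = 0 ∨ ∃ i, i + df = d ∧ a.IsHomogeneous i) ∧
      (b = 0 ∨ ∃ i, i + dg = d ∧ b.IsHomogeneous i) := by
  obtain ⟨a, b, hab⟩ := Ideal.mem_span_pair.mp hm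
  obtain ⟨a', ha, ha'⟩ := aux_comp a f df d hf
  obtain ⟨b', hb, hb'⟩ := aux_comp b g dg d hg
  refine ⟨a', b', ?_, ha', hb'⟩
  rw [← ha, ← hb, ← map_add, hab, homogeneousComponent_of_mem hh, if_pos rfl]

theorem aux_reg {R : Type} [CommRing R] (f g : R)
    (h : RingTheory.Sequence.IsRegular R [f, g]) (x : R) (hx : f ∣ g * x) : f ∣ x := by
  have h1 := h.toIsWeaklyRegular.regular_mod_prev 1 (by simp)
  have h2 := mem_of_isSMulRegular_quotient_of_smul_mem (x := x) h1
  simp [Ideal.mem_span_singleton] at h2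
  exact h2 hx

theorem aux_ne {R : Type} [CommRing R] [Nontrivial R] (f g : R)
    (h : RingTheory.Sequence.IsRegular R [f, g]) : f ≠ 0 := by
  rintro rfl
  have h1 := ((RingTheory.Sequence.isRegular_cons_iff _ _ _).mp h).1
  exact one_ne_zero (h1 (by simp : (0:R) • (1:R) = (0:R) • (0:R)))

open MvPolynomial in
theorem aux_cc {k : Type} [Field k] {n : ℕ} (f : MvPolynomial (Fin (n+1)) k) (d : ℕ) (hd : 0 < d)
    (hf : f.IsHomogeneous d) : constantCoeff f = 0 := by
  rw [constantCoeff_eq]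
  exact hf.coeff_eq_zero (by simpa using hd.ne)

theorem aux_arith {a b c d : ℕ} (ha : 0 < a) (hb : 0 < b) (h1 : a ≤ c) (h2 : b ≤ d)
    (h : c * d = a * b) : c = a ∧ d = b := by
  constructor <;> nlinarith

/-- A height-two complete intersection contained in another one of the same degree is
equal to it. -/
theorem stmt_8 (f g f' g' : MvPolynomial (Fin (n+1)) k)
    (df dg df' dg' : ℕ)
    (hdf : 0 < df) (hdg : 0 < dg) (hdf' : 0 < df') (hdg' : 0 < dg')
    (hfhom : MvPolynomial.IsHomogeneous f df) (hghom : MvPolynomial.IsHomogeneous g dg)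
    (hfhom' : MvPolynomial.IsHomogeneous f' df') (hghom' : MvPolynomial.IsHomogeneous g' dg')
    (hreg : RingTheory.Sequence.IsRegular (MvPolynomial (Fin (n+1)) k) [f, g])
    (hreg' : RingTheory.Sequence.IsRegular (MvPolynomial (Fin (n+1)) k) [f', g'])
    (hsub : Ideal.span {f', g'} ≤ (Ideal.span {f, g} : Ideal (MvPolynomial (Fin (n+1)) k)))
    (hdeg : df' * dg' = df * dg) :
    Ideal.span {f', g'} = (Ideal.span {f, g} : Ideal (MvPolynomial (Fin (n+1)) k)) := by
  obtain ⟨a, b, h1, ha, hb⟩ := aux_mem f g f' df dg df' hfhom hghom hfhom'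
    (hsub (Ideal.subset_span (by simp)))
  obtain ⟨c, e, h2, hc, he⟩ := aux_mem f g g' df dg dg' hfhom hghom hghom'
    (hsub (Ideal.subset_span (by simp)))
  have hf0 : f' ≠ 0 := aux_ne f' g' hreg'
  have hD : a * e - b * c ≠ 0 := by
    intro hD
    obtain ⟨s, hs⟩ := aux_reg f' g' hreg' a ⟨c, by rw [← h1, ← h2]; linear_combination g * hD⟩
    obtain ⟨t, ht⟩ := aux_reg f' g' hreg' b ⟨e, by rw [← h1, ← h2]; linear_combination -f * hD⟩
    have h3 : f' * (s * f + t * g) = f' * 1 := by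
      rw [mul_one]; linear_combination h1 - f * hs - g * ht
    have h4 := congrArg constantCoeff (mul_left_cancel₀ hf0 h3)
    simp [aux_cc f df hdf hfhom, aux_cc g dg hdg hghom] at h4
  have hdegs : (df' = df ∧ dg' = dg) ∨ (df' = dg ∧ dg' = df) := by
    by_cases hae : a = 0 ∨ e = 0
    · have hbc : b ≠ 0 ∧ c ≠ 0 := by
        constructor <;> rintro rfl <;> rcases hae with rfl | rfl <;> simp at hD
      obtain ⟨i, hi, -⟩ := hb.resolve_left hbc.1
      obtain ⟨j, hj, -⟩ := hc.resolve_left hbc.2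
      exact Or.inr (aux_arith hdg hdf (by omega) (by omega) (by rw [hdeg, mul_comm]))
    · push Not at hae
      obtain ⟨i, hi, -⟩ := ha.resolve_left hae.1
      obtain ⟨j, hj, -⟩ := he.resolve_left hae.2
      exact Or.inl (aux_arith hdf hdg (by omega) (by omega) hdeg)
  have hD0 : (a * e - b * c).IsHomogeneous 0 := by
    have hsum : df' + dg' = df + dg := by omega
    apply IsHomogeneous.sub
    · rcases ha with rfl | ⟨i, hi, ha⟩
      · simpa using isHomogeneous_zero _ _ _
      rcases he with rfl | ⟨j, hj, he⟩
      · simpa using isHomogeneous_zero _ _ _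
      have := ha.mul he
      rwa [show i + j = 0 by omega] at this
    · rcases hb with rfl | ⟨i, hi, hb⟩
      · simpa using isHomogeneous_zero _ _ _
      rcases hc with rfl | ⟨j, hj, hc⟩
      · simpa using isHomogeneous_zero _ _ _
      have := hb.mul hc
      rwa [show i + j = 0 by omega] at this
  obtain ⟨u, hu⟩ : ∃ u : k, a * e - b * c = C u :=
    ⟨_, totalDegree_eq_zero_iff_eq_C.mp ((totalDegree_zero_iff_isHomogeneous (p := a * e - b * c)).mpr hD0)⟩
  have hu0 : u ≠ 0 := by
    rintro rfl
    simp [hu] at hD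
  have hinv : C u⁻¹ * (a * e - b * c) = 1 := by
    rw [hu, ← C_mul, inv_mul_cancel₀ hu0, C_1]
  apply le_antisymm hsub
  rw [Ideal.span_le]
  rintro x (rfl | rfl)
  · exact Ideal.mem_span_pair.mpr ⟨C u⁻¹ * e, -(C u⁻¹ * b), by
      rw [← h1, ← h2]; linear_combination x * hinv⟩
  · exact Ideal.mem_span_pair.mpr ⟨-(C u⁻¹ * c), C u⁻¹ * a, by
      rw [← h1, ← h2]; linear_combination x * hinv⟩

end
end

section
/- Assume the field k is infinite and n ≥ 2. Let f, g, h be a regular sequence of homogeneous elements of positive degree in R with deg f ≤ deg g ≤ deg h, and let f', g' ∈ (f,g,h) be homogeneous elements forming a regular sequence with deg f' = deg f and deg g' = deg g. Then there exists a homogeneous element h' ∈ (f,g,h) of degree deg h such that f', g', h' is a regular sequence and (f',g',h') = (f,g,h); in particular {f', g'} extends to a minimal generating set of the complete intersection (f,g,h). -/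
/-
Common setup: `R = k[x₀,…,xₙ]` is the standard graded polynomial ring
`MvPolynomial (Fin (n+1)) k` over a field `k`.
-/

open CategoryTheory MvPolynomial RingTheory

noncomputable section

variable {k : Type} [Field k] {n : ℕ}

section Helpers

open scoped Pointwise

attribute [local instance] MvPolynomial.gradedAlgebra

lemma hc_mul {a : MvPolynomial (Fin (n+1)) k} {e : ℕ} (ha : a.IsHomogeneous e)
    (y : MvPolynomial (Fin (n+1)) k) (d : ℕ) :
    homogeneousComponent d (y * a) =
      if e ≤ d then homogeneousComponent (d - e) y * a else 0 := by
  have key : ∀ (i : ℕ) (φ : MvPolynomial (Fin (n+1)) k),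
      homogeneousComponent i φ =
        (DirectSum.decompose (homogeneousSubmodule (Fin (n+1)) k) φ i :
          MvPolynomial (Fin (n+1)) k) :=
    fun i φ => (decomposition.decompose'_apply φ i).symm
  rw [key, key]
  exact DirectSum.coe_decompose_mul_of_right_mem (homogeneousSubmodule (Fin (n+1)) k) d
    ((mem_homogeneousSubmodule _ _).2 ha)

lemma nak_aux {J N : Ideal (MvPolynomial (Fin (n+1)) k)}
    (hJ : J.IsHomogeneous (homogeneousSubmodule (Fin (n+1)) k))
    {a : MvPolynomial (Fin (n+1)) k} {e : ℕ} (ha : a.IsHomogeneous e) (he : 0 < e)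
    (H : ∀ x ∈ N, ∃ y ∈ N, x - y * a ∈ J) : N ≤ J := by
  have key : ∀ m : ℕ, ∀ x ∈ N, ∃ y ∈ N, x - y * a ^ m ∈ J := by
    intro m
    induction m with
    | zero => intro x hx; exact ⟨x, hx, by simp⟩
    | succ m ih =>
      intro x hx
      obtain ⟨y, hy, hxy⟩ := ih x hx
      obtain ⟨z, hz, hyz⟩ := H y hy
      refine ⟨z, hz, ?_⟩
      have : x - z * a ^ (m+1) = (x - y * a ^ m) + a ^ m * (y - z * a) := by ring
      rw [this]
      exact J.add_mem hxy (J.mul_mem_left _ hyz)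
  intro x hx
  rw [mem_iff_homogeneousComponent_mem hJ]
  intro d
  obtain ⟨y, -, hxy⟩ := key (d+1) x hx
  have h1 := homogeneousComponent_mem_of_mem hJ hxy d
  have h2 : ¬ (e * (d+1) ≤ d) := by nlinarith
  rwa [map_sub, hc_mul (ha.pow (d+1)), if_neg h2, sub_zero] at h1

lemma nak_quot {J : Ideal (MvPolynomial (Fin (n+1)) k)}
    (hJ : J.IsHomogeneous (homogeneousSubmodule (Fin (n+1)) k))
    {a : MvPolynomial (Fin (n+1)) k} {e : ℕ} (hae : a.IsHomogeneous e) (he : 0 < e)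
    (K : Submodule (MvPolynomial (Fin (n+1)) k) (MvPolynomial (Fin (n+1)) k ⧸ J))
    (hK : K = a • K) : K = ⊥ := by
  have hN : K.comap (Submodule.mkQ J) ≤ J := by
    apply nak_aux hJ hae he
    intro x hx
    rw [Submodule.mem_comap, hK] at hx
    obtain ⟨y, hy, hxy⟩ := (Submodule.mem_smul_pointwise_iff_exists _ _ _).1 hx
    obtain ⟨z, rfl⟩ := Submodule.mkQ_surjective J y
    refine ⟨z, hy, ?_⟩
    rw [← map_smul] at hxy
    have := (Submodule.Quotient.eq J).1 hxy.symm
    rwa [smul_eq_mul, mul_comm] at this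
  rw [eq_bot_iff]
  intro y hy
  obtain ⟨x, rfl⟩ := Submodule.mkQ_surjective J y
  have : x ∈ J := hN hy
  exact (Submodule.mem_bot _).2 ((Submodule.Quotient.mk_eq_zero J).2 this)

lemma perm_aux {l l' : List (MvPolynomial (Fin (n+1)) k)}
    (hl : ∀ f ∈ l, ∃ d, 0 < d ∧ MvPolynomial.IsHomogeneous f d)
    (h : RingTheory.Sequence.IsWeaklyRegular (MvPolynomial (Fin (n+1)) k) l)
    (hp : l.Perm l') :
    RingTheory.Sequence.IsWeaklyRegular (MvPolynomial (Fin (n+1)) k) l' := by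
  refine h.prototype_perm hp ?_
  intro a b rs hsub K hK
  have hmem : ∀ x ∈ a :: b :: rs, x ∈ l := fun x hx => hsub.subset hx
  obtain ⟨e, he, hae⟩ := hl a (hmem a (by simp))
  refine nak_quot ?_ hae he K hK
  have : (Ideal.ofList rs • ⊤ : Ideal (MvPolynomial (Fin (n+1)) k)) = Ideal.span {x | x ∈ rs} := by
    simp [Ideal.ofList]
  rw [this]
  apply Ideal.homogeneous_span
  intro x hx
  have hx' : x ∈ rs := hx
  obtain ⟨d, -, hd⟩ := hl x (hmem x (by simp [hx']))
  exact ⟨d, (mem_homogeneousSubmodule _ _).2 hd⟩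

lemma last_aux {a b c c' p q : MvPolynomial (Fin (n+1)) k} {u : k} (hu : u ≠ 0)
    (hc : c' = C u * c + p * a + q * b)
    (h : RingTheory.Sequence.IsWeaklyRegular (MvPolynomial (Fin (n+1)) k) [a, b, c]) :
    RingTheory.Sequence.IsWeaklyRegular (MvPolynomial (Fin (n+1)) k) [a, b, c'] := by
  have e1 : [a, b, c] = [a, b] ++ [c] := rfl
  have e2 : [a, b, c'] = [a, b] ++ [c'] := rfl
  rw [e1, Sequence.isWeaklyRegular_append_iff, Sequence.isWeaklyRegular_singleton_iff] at h
  rw [e2, Sequence.isWeaklyRegular_append_iff, Sequence.isWeaklyRegular_singleton_iff]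
  refine ⟨h.1, ?_⟩
  have h2 := h.2
  rw [isSMulRegular_quotient_iff_mem_of_smul_mem] at h2 ⊢
  intro x hx
  apply h2
  simp only [smul_eq_mul, Ideal.mul_top] at hx ⊢
  have ha : a ∈ Ideal.ofList [a, b] := Ideal.subset_span (by simp)
  have hb : b ∈ Ideal.ofList [a, b] := Ideal.subset_span (by simp)
  have hx2 : c * x = C u⁻¹ * (c' * x) - (C u⁻¹ * p * x) * a - (C u⁻¹ * q * x) * b := by
    have : (C u⁻¹ * C u : MvPolynomial (Fin (n+1)) k) = 1 := by
      rw [← C_mul, inv_mul_cancel₀ hu, C_1]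
    rw [hc]
    linear_combination (-(c * x)) * this
  rw [hx2]
  exact Ideal.sub_mem _ (Ideal.sub_mem _ (Ideal.mul_mem_left _ _ hx) (Ideal.mul_mem_left _ _ ha))
    (Ideal.mul_mem_left _ _ hb)

/-- A homogeneous regular sequence of length three generating `I`. -/
structure GoodTriple (I : Ideal (MvPolynomial (Fin (n+1)) k))
    (a b c : MvPolynomial (Fin (n+1)) k) (da db dc : ℕ) : Prop where
  pa : 0 < da
  pb : 0 < db
  pc : 0 < dc
  ha : a.IsHomogeneous da
  hb : b.IsHomogeneous db
  hc : c.IsHomogeneous dc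
  wr : RingTheory.Sequence.IsWeaklyRegular (MvPolynomial (Fin (n+1)) k) [a, b, c]
  sp : Ideal.span {a, b, c} = I

namespace GoodTriple

variable {I : Ideal (MvPolynomial (Fin (n+1)) k)}
    {a b c : MvPolynomial (Fin (n+1)) k} {da db dc : ℕ}

lemma all (H : GoodTriple I a b c da db dc) :
    ∀ f ∈ [a, b, c], ∃ d, 0 < d ∧ MvPolynomial.IsHomogeneous f d := by
  intro f hf
  simp only [List.mem_cons, List.not_mem_nil, or_false] at hf
  rcases hf with rfl | rfl | rfl
  · exact ⟨_, H.pa, H.ha⟩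
  · exact ⟨_, H.pb, H.hb⟩
  · exact ⟨_, H.pc, H.hc⟩

lemma rot (H : GoodTriple I a b c da db dc) : GoodTriple I b c a db dc da :=
  ⟨H.pb, H.pc, H.pa, H.hb, H.hc, H.ha,
    perm_aux H.all H.wr (List.perm_append_comm (l₁ := [a]) (l₂ := [b, c])), by
      rw [← H.sp]; congr 1; ext x; simp only [Set.mem_insert_iff, Set.mem_singleton_iff]; tauto⟩

lemma swap (H : GoodTriple I a b c da db dc) : GoodTriple I b a c db da dc :=
  ⟨H.pb, H.pa, H.pc, H.hb, H.ha, H.hc,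
    perm_aux H.all H.wr (List.Perm.swap _ _ _), by
      rw [← H.sp]; congr 1; ext x; simp only [Set.mem_insert_iff, Set.mem_singleton_iff]; tauto⟩

lemma repl (H : GoodTriple I a b c da db dc) {c' p q : MvPolynomial (Fin (n+1)) k} {u : k}
    (hu : u ≠ 0) (hc : c' = C u * c + p * a + q * b) (hhom : c'.IsHomogeneous dc) :
    GoodTriple I a b c' da db dc := by
  refine ⟨H.pa, H.pb, H.pc, H.ha, H.hb, hhom, last_aux hu hc H.wr, ?_⟩
  rw [← H.sp]
  have hcc : c = C u⁻¹ * c' + (-(C u⁻¹ * p)) * a + (-(C u⁻¹ * q)) * b := by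
    have : (C u⁻¹ * C u : MvPolynomial (Fin (n+1)) k) = 1 := by
      rw [← C_mul, inv_mul_cancel₀ hu, C_1]
    rw [hc]
    linear_combination (-c) * this
  apply le_antisymm
  · rw [Ideal.span_le]
    rintro x (rfl | rfl | rfl)
    · exact Ideal.subset_span (by simp)
    · exact Ideal.subset_span (by simp)
    · exact Submodule.mem_span_triple.2 ⟨p, q, C u, by rw [hc]; simp only [smul_eq_mul]; ring⟩
  · rw [Ideal.span_le]
    rintro x (rfl | rfl | rfl)
    · exact Ideal.subset_span (by simp)
    · exact Ideal.subset_span (by simp)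
    · refine Submodule.mem_span_triple.2 ⟨-(C u⁻¹ * p), -(C u⁻¹ * q), C u⁻¹, ?_⟩
      simp only [smul_eq_mul]
      linear_combination -hcc

lemma coeffs (H : GoodTriple I a b c da db dc) {x : MvPolynomial (Fin (n+1)) k} {d : ℕ}
    (hx : x ∈ I) (hd : x.IsHomogeneous d) :
    ∃ p q r : MvPolynomial (Fin (n+1)) k, x = p * a + q * b + r * c ∧
      (d < da → p = 0) ∧ (d < db → q = 0) ∧ (d < dc → r = 0) ∧
      (d = da → ∃ u, p = C u) ∧ (d = db → ∃ u, q = C u) ∧ (d = dc → ∃ u, r = C u) := by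
  rw [← H.sp] at hx
  obtain ⟨p, q, r, h⟩ := Submodule.mem_span_triple.1 hx
  simp only [smul_eq_mul] at h
  have h2 : x = homogeneousComponent d (p * a + q * b + r * c) := by
    rw [h, homogeneousComponent_eq_self ((mem_homogeneousSubmodule _ _).2 hd)]
  rw [map_add, map_add, hc_mul H.ha, hc_mul H.hb, hc_mul H.hc] at h2
  refine ⟨if da ≤ d then homogeneousComponent (d - da) p else 0,
    if db ≤ d then homogeneousComponent (d - db) q else 0,
    if dc ≤ d then homogeneousComponent (d - dc) r else 0, ?_, ?_, ?_, ?_, ?_, ?_, ?_⟩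
  · simpa only [ite_mul, zero_mul] using h2
  · intro h; rw [if_neg (by omega)]
  · intro h; rw [if_neg (by omega)]
  · intro h; rw [if_neg (by omega)]
  · rintro rfl; exact ⟨coeff 0 p, by simp⟩
  · rintro rfl; exact ⟨coeff 0 q, by simp⟩
  · rintro rfl; exact ⟨coeff 0 r, by simp⟩

lemma stepA (H : GoodTriple I a b c da db dc) (hab : da ≤ db) (hbc : db ≤ dc)
    {x : MvPolynomial (Fin (n+1)) k} (hx : x ∈ I) (hd : x.IsHomogeneous da) (hx0 : x ≠ 0) :
    ∃ b' c', GoodTriple I x b' c' da db dc := by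
  obtain ⟨p, q, r, h, -, h2, h3, h4, h5, h6⟩ := H.coeffs hx hd
  obtain ⟨u, rfl⟩ := h4 rfl
  by_cases hu : u = 0
  · subst hu
    by_cases hr : r = 0
    · subst hr
      have hE : da = db := by
        by_contra hne
        rw [h2 (by omega)] at h
        simp at h; exact hx0 h
      obtain ⟨v, rfl⟩ := h5 hE
      have hv : v ≠ 0 := by rintro rfl; simp at h; exact hx0 h
      subst hE
      exact ⟨a, c, (H.swap.rot.repl (c' := x) (p := 0) (q := 0) hv (by simp [h]) hd).rot.rot⟩
    · have hE : da = dc := by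
        by_contra hne
        exact hr (h3 (by omega))
      obtain ⟨v, rfl⟩ := h6 hE
      have hv : v ≠ 0 := by rintro rfl; simp at hr
      have hE2 : db = da := by omega
      subst hE hE2
      exact ⟨a, b, (H.repl (c' := x) (p := 0) (q := q) hv (by rw [h, C_0]; ring) hd).rot.rot⟩
  · exact ⟨b, c, (H.rot.repl (c' := x) (p := q) (q := r) hu (by linear_combination h) hd).rot.rot⟩

lemma stepB (H : GoodTriple I a b c da db dc) (hbc : db ≤ dc)
    {x : MvPolynomial (Fin (n+1)) k} (hx : x ∈ I) (hd : x.IsHomogeneous db)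
    (hx0 : x ∉ Ideal.span {a}) :
    ∃ c', GoodTriple I a x c' da db dc := by
  obtain ⟨p, q, r, h, -, h2, h3, h4, h5, h6⟩ := H.coeffs hx hd
  obtain ⟨u, rfl⟩ := h5 rfl
  by_cases hu : u = 0
  · subst hu
    have hr : r ≠ 0 := by
      rintro rfl
      apply hx0
      rw [h]
      exact Ideal.mem_span_singleton'.2 ⟨p, by simp⟩
    have hE : db = dc := by
      by_contra hne
      exact hr (h3 (by omega))
    obtain ⟨v, rfl⟩ := h6 hE
    have hv : v ≠ 0 := by rintro rfl; simp at hr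
    subst hE
    exact ⟨b, (H.repl (c' := x) (p := p) (q := 0) hv (by rw [h, C_0]; ring) hd).rot.rot.swap⟩
  · exact ⟨c, (H.rot.rot.repl (c' := x) (p := r) (q := p) hu (by rw [h]; ring) hd).rot⟩

end GoodTriple

end Helpers

/-- Case 1 in the proof of the main theorem: if `f', g' ∈ (f,g,h)` form a regular
sequence with `deg f' = deg f` and `deg g' = deg g`, then they can be completed by some
`h' ∈ (f,g,h)` of degree `deg h` to a regular sequence generating `(f,g,h)`. -/
theorem stmt_11 [Infinite k] (hn : 2 ≤ n)
    (f g h f' g' : MvPolynomial (Fin (n+1)) k) (df dg dh : ℕ)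
    (hdf : 0 < df) (hdg : 0 < dg) (hdh : 0 < dh)
    (hfg : df ≤ dg) (hgh : dg ≤ dh)
    (hfhom : MvPolynomial.IsHomogeneous f df) (hghom : MvPolynomial.IsHomogeneous g dg)
    (hhhom : MvPolynomial.IsHomogeneous h dh)
    (hreg : RingTheory.Sequence.IsRegular (MvPolynomial (Fin (n+1)) k) [f, g, h])
    (hf'mem : f' ∈ (Ideal.span {f, g, h} : Ideal (MvPolynomial (Fin (n+1)) k)))
    (hg'mem : g' ∈ (Ideal.span {f, g, h} : Ideal (MvPolynomial (Fin (n+1)) k)))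
    (hfhom' : MvPolynomial.IsHomogeneous f' df) (hghom' : MvPolynomial.IsHomogeneous g' dg)
    (hreg' : RingTheory.Sequence.IsRegular (MvPolynomial (Fin (n+1)) k) [f', g']) :
    ∃ h' ∈ (Ideal.span {f, g, h} : Ideal (MvPolynomial (Fin (n+1)) k)),
      MvPolynomial.IsHomogeneous h' dh ∧
      RingTheory.Sequence.IsRegular (MvPolynomial (Fin (n+1)) k) [f', g', h'] ∧
      Ideal.span {f', g', h'} = (Ideal.span {f, g, h} : Ideal (MvPolynomial (Fin (n+1)) k)) := by
  have H : GoodTriple (Ideal.span {f, g, h}) f g h df dg dh :=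
    ⟨hdf, hdg, hdh, hfhom, hghom, hhhom, hreg.toIsWeaklyRegular, rfl⟩
  have hw := hreg'.toIsWeaklyRegular
  have hf0 : f' ≠ 0 := by
    rintro rfl
    have := ((Sequence.isWeaklyRegular_cons_iff _ _ _).1 hw).1
    have h1 : (1 : MvPolynomial (Fin (n+1)) k) = 0 := this (by simp)
    exact one_ne_zero h1
  have hg0 : g' ∉ Ideal.span {f'} := by
    intro hmem
    have e : [f', g'] = [f'] ++ [g'] := rfl
    rw [e, Sequence.isWeaklyRegular_append_iff, Sequence.isWeaklyRegular_singleton_iff,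
      Sequence.isWeaklyRegular_singleton_iff] at hw
    have h2 := hw.2
    rw [isSMulRegular_quotient_iff_mem_of_smul_mem] at h2
    have h3 := h2 1 (by simpa [Ideal.ofList_singleton] using hmem)
    apply hreg'.top_ne_smul
    symm
    rw [Ideal.smul_eq_mul, Ideal.mul_top, Ideal.eq_top_iff_one]
    simp only [smul_eq_mul, Ideal.mul_top] at h3
    exact Ideal.span_mono (by simp) h3
  obtain ⟨g₁, h₁, H₁⟩ := H.stepA hfg hgh hf'mem hfhom' hf0
  obtain ⟨h', H'⟩ := H₁.stepB hgh hg'mem hghom' hg0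
  refine ⟨h', ?_, H'.hc, ⟨H'.wr, ?_⟩, H'.sp⟩
  · rw [← H'.sp]; exact Ideal.subset_span (by simp)
  · have e1 : Ideal.ofList [f', g', h'] = Ideal.ofList [f, g, h] := by
      have t : ∀ a b c : MvPolynomial (Fin (n+1)) k,
          Ideal.ofList [a, b, c] = Ideal.span {a, b, c} := by
        intro a b c
        unfold Ideal.ofList
        congr 1; ext x; simp
      rw [t, t, H'.sp]
    rw [e1]
    exact hreg.top_ne_smul

end
end
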